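/- Let A := N/d + c·L and for z > 0 define r(z) := (N + A)·log₂ z + log₂((A+1)·e^{A+1}) + N·log₂ d. For any realization of Algorithm RFD on x^n with rescale partition R, and any piecewise stationary model PWS for sequences of length n with partition S, it holds that ℓ(x^n; RFD) − ℓ(x^n; PWS) ≤ |S|·[ (1−c)·L·log₂(e·(L+1)) + log₂((1−c)·L) + r(L+1) ] + (|R| − 1)·r(L+1). -/

import Mathlib

open Finset

/-- One call to `Update`: if the total would exceed `T`, rescale first
(replace each count `s i` by `max 1 ⌊cf * s i⌋`), then add `d` to the count of `x`. -/
noncomputable def RFDupdate {N : ℕ} (cf : ℝ) (d T : ℕ) (s : Fin N → ℕ) (x : Fin N) : Fin N → ℕ :=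
  let s' : Fin N → ℕ :=
    if T < (∑ i, s i) + d then (fun i => max 1 ⌊cf * (s i : ℝ)⌋₊) else s
  fun i => if i = x then s' i + d else s' i

/-- State (counts) of Algorithm RFD after `k` update steps on the input sequence `xs`
(0-indexed: the `k`-th step processes symbol `xs (k-1)`). -/
noncomputable def RFDcounts {N : ℕ} (cf : ℝ) (d T : ℕ) (s0 : Fin N → ℕ) (xs : ℕ → Fin N) : ℕ → Fin N → ℕ
  | 0 => s0
  | k + 1 => RFDupdate cf d T (RFDcounts cf d T s0 xs k) (xs k)

/-- Total counter `t` after `k` update steps. -/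
noncomputable def RFDtotal {N : ℕ} (cf : ℝ) (d T : ℕ) (s0 : Fin N → ℕ) (xs : ℕ → Fin N) (k : ℕ) : ℕ :=
  ∑ i, RFDcounts cf d T s0 xs k i

/-- A rescale takes place in step `k ≥ 1` iff at the beginning of step `k`
the total plus `d` exceeds `T`. -/
def RFDrescaleAt {N : ℕ} (cf : ℝ) (d T : ℕ) (s0 : Fin N → ℕ) (xs : ℕ → Fin N) (k : ℕ) : Prop :=
  1 ≤ k ∧ T < RFDtotal cf d T s0 xs (k - 1) + d

/-- `P` is a partition of the integer interval `[a,b]` into consecutive closed intervals,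
listed in order; an interval `[i,j]` is represented by the pair `(i,j)`. -/
def ConsecPartition (a b : ℕ) (P : List (ℕ × ℕ)) : Prop :=
  P ≠ [] ∧ P.head?.map Prod.fst = some a ∧ P.getLast?.map Prod.snd = some b ∧
    (∀ p ∈ P, p.1 ≤ p.2) ∧ P.Chain' (fun p q => q.1 = p.2 + 1)

/-- `P` is the rescale partition of `[a,b]`: a partition into consecutive intervals `[i,j]`
such that no rescale occurs at steps `i,…,j-1`, and a rescale occurs at step `j` whenever
`j < b` (for the last interval, a rescale at its last step is optional). -/
def RFDrescalePartition {N : ℕ} (cf : ℝ) (d T : ℕ) (s0 : Fin N → ℕ) (xs : ℕ → Fin N)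
    (a b : ℕ) (P : List (ℕ × ℕ)) : Prop :=
  ConsecPartition a b P ∧
    (∀ p ∈ P, ∀ k, p.1 ≤ k → k < p.2 → ¬ RFDrescaleAt cf d T s0 xs k) ∧
    (∀ p ∈ P, p.2 < b → RFDrescaleAt cf d T s0 xs p.2)

/-- The probability `RFD(x; x^k)` that Algorithm RFD assigns to symbol `x` after `k` steps. -/
noncomputable def RFDprob {N : ℕ} (cf : ℝ) (d T : ℕ) (s0 : Fin N → ℕ) (xs : ℕ → Fin N)
    (k : ℕ) (x : Fin N) : ℝ :=
  (RFDcounts cf d T s0 xs k x : ℝ) / (RFDtotal cf d T s0 xs k : ℝ)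

/-- Ideal code length (in bits) of Algorithm RFD on steps `a,…,b` (1-indexed steps;
step `k` encodes symbol `xs (k-1)` using the prediction after `k-1` steps). -/
noncomputable def RFDcodeLen {N : ℕ} (cf : ℝ) (d T : ℕ) (s0 : Fin N → ℕ) (xs : ℕ → Fin N)
    (a b : ℕ) : ℝ :=
  -∑ k ∈ Finset.Icc a b, Real.logb 2 (RFDprob cf d T s0 xs (k - 1) (xs (k - 1)))

/-- Ideal code length (in bits) of a fixed distribution `p` on steps `a,…,b`. -/
noncomputable def distCodeLen {N : ℕ} (p : Fin N → ℝ) (xs : ℕ → Fin N) (a b : ℕ) : ℝ :=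
  -∑ k ∈ Finset.Icc a b, Real.logb 2 (p (xs (k - 1)))

/-- The redundancy function `r(z) = (N + A)·log₂ z + log₂((A+1)·e^(A+1)) + N·log₂ d`. -/
noncomputable def rBound (N d : ℕ) (A z : ℝ) : ℝ :=
  ((N : ℝ) + A) * Real.logb 2 z + Real.logb 2 ((A + 1) * Real.exp (A + 1))
    + (N : ℝ) * Real.logb 2 d

/-- Ideal code length of a piecewise stationary model with partition `S` (a list of
consecutive intervals of `[1,n]`) and per-segment distributions `pI`: on each segment
`I = [a,b] ∈ S`, symbol `x_k` (`a ≤ k ≤ b`) is coded with `-log₂ p_I(x_k)` bits. -/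
noncomputable def pwsCodeLen {N : ℕ} (S : List (ℕ × ℕ)) (pI : ℕ × ℕ → Fin N → ℝ)
    (xs : ℕ → Fin N) : ℝ :=
  (S.map (fun q => -∑ k ∈ Finset.Icc q.1 q.2, Real.logb 2 (pI q (xs (k - 1))))).sum

/-! ### Partitions into consecutive intervals -/

theorem ConsecPartition.cons_cases {a b : ℕ} {p : ℕ × ℕ} {P : List (ℕ × ℕ)}
    (h : ConsecPartition a b (p :: P)) :
    p.1 = a ∧ p.1 ≤ p.2 ∧ ((P = [] ∧ p.2 = b) ∨ ConsecPartition (p.2 + 1) b P) := by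
  obtain ⟨-, h1, h2, h3, h4⟩ := h
  refine ⟨by simpa using h1, h3 p (by simp), ?_⟩
  cases P with
  | nil => left; simpa using h2
  | cons q P =>
    right
    have h4' := List.isChain_cons_cons.mp h4
    refine ⟨by simp, by simpa using h4'.1, ?_, fun r hr => h3 r (List.mem_cons_of_mem _ hr), h4'.2⟩
    simpa [List.getLast?_cons_cons] using h2

theorem ConsecPartition.le {P : List (ℕ × ℕ)} :
    ∀ {a b : ℕ}, ConsecPartition a b P → a ≤ b := by
  induction P with
  | nil => intro a b h; exact absurd rfl h.1
  | cons p P ih =>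
    intro a b h
    obtain ⟨h1, h2, ⟨-, h3⟩ | h3⟩ := h.cons_cases
    · omega
    · have := ih h3; omega

theorem ConsecPartition.mem_bounds {P : List (ℕ × ℕ)} :
    ∀ {a b : ℕ}, ConsecPartition a b P → ∀ q ∈ P, a ≤ q.1 ∧ q.1 ≤ q.2 ∧ q.2 ≤ b := by
  induction P with
  | nil => simp
  | cons p P ih =>
    intro a b h q hq
    obtain ⟨h1, h2, ⟨h4, h3⟩ | h3⟩ := h.cons_cases
    · subst h4
      obtain rfl : q = p := by simpa using hq
      omega
    · have hle := h3.le
      rcases List.mem_cons.mp hq with rfl | hq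
      · omega
      · have := ih h3 q hq; omega

theorem ConsecPartition.exists_mem {P : List (ℕ × ℕ)} :
    ∀ {a b : ℕ}, ConsecPartition a b P → ∀ k, a ≤ k → k ≤ b → ∃ q ∈ P, q.1 ≤ k ∧ k ≤ q.2 := by
  induction P with
  | nil => intro a b h; exact absurd rfl h.1
  | cons p P ih =>
    intro a b h k hak hkb
    obtain ⟨h1, h2, ⟨h4, h3⟩ | h3⟩ := h.cons_cases
    · exact ⟨p, by simp, by omega, by omega⟩
    · by_cases hk : k ≤ p.2
      · exact ⟨p, by simp, by omega, hk⟩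
      · obtain ⟨q, hq, hq'⟩ := ih h3 k (by omega) hkb
        exact ⟨q, List.mem_cons_of_mem _ hq, hq'⟩

theorem ConsecPartition.sum_eq {P : List (ℕ × ℕ)} (f : ℕ → ℝ) :
    ∀ {a b : ℕ}, ConsecPartition a b P →
      ∑ k ∈ Finset.Icc a b, f k = (P.map fun q => ∑ k ∈ Finset.Icc q.1 q.2, f k).sum := by
  induction P with
  | nil => intro a b h; exact absurd rfl h.1
  | cons p P ih =>
    intro a b h
    obtain ⟨h1, h2, ⟨h4, h3⟩ | h3⟩ := h.cons_cases
    · simp [h4, h1, h3]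
    · have hle := h3.le
      rw [List.map_cons, List.sum_cons, ← ih h3]
      simp only [← Finset.Ico_succ_right_eq_Icc, Nat.succ_eq_succ, Nat.succ_eq_add_one]
      rw [Finset.sum_Ico_consecutive _ (by omega) (by omega), h1]

/-! ### Sums over intervals cut at marked points -/

open Classical in
theorem sum_Icc_le_of_marked (F : ℕ → ℝ) (Q : ℕ → Prop) (a e : ℕ) (C r : ℝ)
    (hfirst : ∀ b, a ≤ b → b ≤ e → (∀ k, a ≤ k → k < b → ¬ Q k) → ∑ k ∈ Finset.Icc a b, F k ≤ C)
    (hnext : ∀ j b, a ≤ j → j < b → b ≤ e → Q j → (∀ k, j < k → k < b → ¬ Q k) →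
      ∑ k ∈ Finset.Icc (j + 1) b, F k ≤ r) (b : ℕ) (hab : a ≤ b) (hbe : b ≤ e) :
    ∑ k ∈ Finset.Icc a b, F k ≤ C + r * ∑ k ∈ Finset.Ico a b, (if Q k then 1 else 0) := by
  induction b using Nat.strong_induction_on with
  | _ b ih =>
  by_cases hQ : ∃ k, a ≤ k ∧ k < b ∧ Q k
  · have hne : ((Finset.Ico a b).filter Q).Nonempty := by
      obtain ⟨k, h1, h2, h3⟩ := hQ
      exact ⟨k, by simp [h1, h2, h3]⟩
    obtain ⟨j, hj, hmax⟩ := Finset.exists_max_image _ id hne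
    simp only [Finset.mem_filter, Finset.mem_Ico, id] at hj hmax
    obtain ⟨⟨haj, hjb⟩, hQj⟩ := hj
    have hlast : ∀ k, j < k → k < b → ¬ Q k := fun k h1 h2 h3 => by
      have := hmax k ⟨⟨by omega, h2⟩, h3⟩
      omega
    have h1 := ih j hjb haj (by omega)
    have h2 := hnext j b haj hjb hbe hQj hlast
    have hF : ∑ k ∈ Finset.Icc a b, F k
        = ∑ k ∈ Finset.Icc a j, F k + ∑ k ∈ Finset.Icc (j + 1) b, F k := by
      simp only [← Finset.Ico_succ_right_eq_Icc, Nat.succ_eq_succ, Nat.succ_eq_add_one]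
      rw [Finset.sum_Ico_consecutive _ (by omega) (by omega)]
    have hI : ∑ k ∈ Finset.Ico a b, (if Q k then (1 : ℝ) else 0)
        = ∑ k ∈ Finset.Ico a j, (if Q k then (1 : ℝ) else 0) + 1 := by
      have hzero : ∑ k ∈ Finset.Ico (j + 1) b, (if Q k then (1 : ℝ) else 0) = 0 :=
        Finset.sum_eq_zero fun k hk => by
          rw [Finset.mem_Ico] at hk
          rw [if_neg (hlast k (by omega) hk.2)]
      rw [← Finset.sum_Ico_consecutive _ haj hjb.le, Finset.sum_eq_sum_Ico_succ_bot hjb,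
        if_pos hQj, hzero, add_zero]
    rw [hF, hI]
    linarith
  · push Not at hQ
    have hzero : ∑ k ∈ Finset.Ico a b, (if Q k then (1 : ℝ) else 0) = 0 :=
      Finset.sum_eq_zero fun k hk => by
        rw [Finset.mem_Ico] at hk
        rw [if_neg (hQ k hk.1 hk.2)]
    rw [hzero, mul_zero, add_zero]
    exact hfirst b hab hbe hQ

/-! ### Invariants of the counts -/

section Counts

variable {N : ℕ} {cf : ℝ} {d T : ℕ} {s0 : Fin N → ℕ} {xs : ℕ → Fin N}

theorem RFDcounts_pos (hs0 : ∀ x, 1 ≤ s0 x) (k : ℕ) (x : Fin N) :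
    1 ≤ RFDcounts cf d T s0 xs k x := by
  induction k generalizing x with
  | zero => exact hs0 x
  | succ k ih =>
    have := ih x
    simp only [RFDcounts, RFDupdate]
    split_ifs <;> (try dsimp only) <;> omega

theorem RFDtotal_ge (hs0 : ∀ x, 1 ≤ s0 x) (k : ℕ) : N ≤ RFDtotal cf d T s0 xs k := by
  have := Finset.sum_le_sum fun (i : Fin N) (_ : i ∈ Finset.univ) =>
    RFDcounts_pos (cf := cf) (d := d) (T := T) (xs := xs) hs0 k i
  simpa [RFDtotal] using this

theorem RFDcounts_succ_of_le {k : ℕ} (h : RFDtotal cf d T s0 xs k + d ≤ T) (x : Fin N) :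
    RFDcounts cf d T s0 xs (k + 1) x
      = RFDcounts cf d T s0 xs k x + if xs k = x then d else 0 := by
  have h' : ¬ T < ∑ i, RFDcounts cf d T s0 xs k i + d := not_lt.mpr h
  simp only [RFDcounts, RFDupdate, h', if_false, eq_comm (a := x)]
  split_ifs <;> simp

theorem RFDtotal_succ_of_le {k : ℕ} (h : RFDtotal cf d T s0 xs k + d ≤ T) :
    RFDtotal cf d T s0 xs (k + 1) = RFDtotal cf d T s0 xs k + d := by
  simp [RFDtotal, RFDcounts_succ_of_le h, Finset.sum_add_distrib]

theorem RFDtotal_succ_of_lt (hs0 : ∀ x, 1 ≤ s0 x) (hc0 : 0 ≤ cf) (hc1 : cf < 1) {k : ℕ}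
    (h : T < RFDtotal cf d T s0 xs k + d) :
    (RFDtotal cf d T s0 xs (k + 1) : ℝ) ≤ N + cf * (RFDtotal cf d T s0 xs k - N) + d := by
  have h' : T < ∑ i, RFDcounts cf d T s0 xs k i + d := h
  have hcount : ∀ i, (RFDcounts cf d T s0 xs (k + 1) i : ℝ)
      ≤ (1 + cf * (RFDcounts cf d T s0 xs k i - 1)) + if i = xs k then (d : ℝ) else 0 := by
    intro i
    have hpos : (1 : ℝ) ≤ RFDcounts cf d T s0 xs k i := by
      exact_mod_cast RFDcounts_pos hs0 k i
    have hmax : ((max 1 ⌊cf * (RFDcounts cf d T s0 xs k i : ℝ)⌋₊ : ℕ) : ℝ)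
        ≤ 1 + cf * (RFDcounts cf d T s0 xs k i - 1) := by
      rw [Nat.cast_max]
      refine max_le ?_ ?_
      · push_cast
        nlinarith
      · have := Nat.floor_le (show 0 ≤ cf * (RFDcounts cf d T s0 xs k i : ℝ) by positivity)
        linarith
    rw [RFDcounts, RFDupdate]
    simp only [h', if_true]
    split_ifs
    · rw [Nat.cast_add]; linarith
    · linarith
  have hsum := Finset.sum_le_sum fun i (_ : i ∈ Finset.univ) => hcount i
  simp only [Finset.sum_add_distrib, ← Finset.mul_sum, Finset.sum_sub_distrib,
    Finset.sum_ite_eq', Finset.mem_univ, if_true, Finset.sum_const, Finset.card_univ,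
    Fintype.card_fin, nsmul_eq_mul, mul_one] at hsum
  simpa [RFDtotal] using hsum

theorem RFDtotal_le (hs0 : ∀ x, 1 ≤ s0 x) (hc0 : 0 ≤ cf) (hc1 : cf < 1)
    (hT : (d : ℝ) ≤ (1 - cf) * ((T : ℝ) - N)) (hsum : ∑ x, s0 x ≤ T) (k : ℕ) :
    RFDtotal cf d T s0 xs k ≤ T := by
  induction k with
  | zero => exact hsum
  | succ k ih =>
    rcases le_or_gt (RFDtotal cf d T s0 xs k + d) T with h | h
    · rwa [RFDtotal_succ_of_le h]
    · have h1 := RFDtotal_succ_of_lt hs0 hc0 hc1 h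
      have h2 : (RFDtotal cf d T s0 xs k : ℝ) ≤ T := by exact_mod_cast ih
      have h3 : (RFDtotal cf d T s0 xs (k + 1) : ℝ) ≤ T := by nlinarith
      exact_mod_cast h3

theorem RFDtotal_add {a m : ℕ} (h : ∀ l < m, RFDtotal cf d T s0 xs (a + l) + d ≤ T) :
    RFDtotal cf d T s0 xs (a + m) = RFDtotal cf d T s0 xs a + d * m := by
  induction m with
  | zero => simp
  | succ m ih =>
    rw [← add_assoc, RFDtotal_succ_of_le (h m (by omega)), ih fun l hl => h l (by omega)]
    ring

end Counts

/-- The number of occurrences of `x` among `u 0, …, u (m - 1)`. -/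
def occurrences {N : ℕ} (u : ℕ → Fin N) (m : ℕ) (x : Fin N) : ℕ :=
  ∑ l ∈ Finset.range m, if u l = x then 1 else 0

section Occurrences

variable {N : ℕ} (u : ℕ → Fin N)

theorem occurrences_succ (m : ℕ) (x : Fin N) :
    occurrences u (m + 1) x = occurrences u m x + if u m = x then 1 else 0 := by
  rw [occurrences, Finset.sum_range_succ, occurrences]

theorem occurrences_le (m : ℕ) (x : Fin N) : occurrences u m x ≤ m := by
  have := Finset.sum_le_sum fun l (_ : l ∈ Finset.range m) =>
    show (if u l = x then 1 else 0) ≤ 1 by split_ifs <;> simp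
  simpa [occurrences] using this

theorem sum_occurrences (m : ℕ) : ∑ x, occurrences u m x = m := by
  simp only [occurrences]
  rw [Finset.sum_comm]
  simp

theorem RFDcounts_add {cf : ℝ} {d T : ℕ} {s0 : Fin N → ℕ} {xs : ℕ → Fin N} {a m : ℕ}
    (h : ∀ l < m, RFDtotal cf d T s0 xs (a + l) + d ≤ T) (x : Fin N) :
    RFDcounts cf d T s0 xs (a + m) x
      = RFDcounts cf d T s0 xs a x + d * occurrences (fun l => xs (a + l)) m x := by
  induction m with
  | zero => simp [occurrences]
  | succ m ih =>
    rw [← add_assoc, RFDcounts_succ_of_le (h m (by omega)), ih fun l hl => h l (by omega),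
      occurrences_succ]
    split_ifs <;> ring

/-- Reordering a product over time into a product over symbols. -/
theorem prod_occurrences (g : Fin N → ℕ → ℝ) (m : ℕ) :
    ∏ k ∈ Finset.range m, g (u k) (occurrences u k (u k))
      = ∏ x, ∏ l ∈ Finset.range (occurrences u m x), g x l := by
  induction m with
  | zero => simp [occurrences]
  | succ m ih =>
    have hstep : ∀ x, ∏ l ∈ Finset.range (occurrences u (m + 1) x), g x l
        = (∏ l ∈ Finset.range (occurrences u m x), g x l)
          * if u m = x then g x (occurrences u m x) else 1 := by
      intro x
      rw [occurrences_succ]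
      split_ifs
      · rw [Finset.prod_range_succ]
      · simp
    rw [Finset.prod_range_succ, ih, Finset.prod_congr rfl fun x _ => hstep x,
      Finset.prod_mul_distrib]
    simp

/-- The probability of a sequence is at most the reciprocal of the size of its type class. -/
theorem factorial_mul_prod_le {p : Fin N → ℝ} (hp0 : ∀ x, 0 ≤ p x) (hp1 : ∑ x, p x = 1) (m : ℕ) :
    (m.factorial : ℝ) * ∏ k ∈ Finset.range m, p (u k)
      ≤ ∏ x, ((occurrences u m x).factorial : ℝ) := by
  have hprod := prod_occurrences u (fun x _ => p x) m
  simp only [Finset.prod_const, Finset.card_range] at hprod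
  have hmem : occurrences u m ∈ Finset.piAntidiag (Finset.univ : Finset (Fin N)) m := by
    simp [Finset.mem_piAntidiag, sum_occurrences]
  have hle : (Nat.multinomial Finset.univ (occurrences u m) : ℝ)
      * ∏ x, p x ^ occurrences u m x ≤ 1 := by
    have hpow := Finset.sum_pow_eq_sum_piAntidiag (Finset.univ : Finset (Fin N)) p m
    rw [hp1, one_pow] at hpow
    rw [hpow]
    refine Finset.single_le_sum (f := fun k : Fin N → ℕ =>
      (Nat.multinomial Finset.univ k : ℝ) * ∏ x, p x ^ k x) (fun k _ => ?_) hmem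
    exact mul_nonneg (Nat.cast_nonneg _) (Finset.prod_nonneg fun x _ => pow_nonneg (hp0 x) _)
  have hspec := Nat.multinomial_spec Finset.univ (occurrences u m)
  rw [sum_occurrences] at hspec
  rw [hprod, ← hspec]
  push_cast
  rw [mul_assoc]
  exact mul_le_of_le_one_right (Finset.prod_nonneg fun x _ => Nat.cast_nonneg _) hle

end Occurrences

/-! ### Estimates of products -/

theorem pow_mul_factorial_le {s d n m : ℕ} (hs : 1 ≤ s) (hd : 1 ≤ d) (hm : 1 ≤ m) (hn : n ≤ m) :
    (d : ℝ) ^ n * n.factorial ≤ (d * m) * ∏ l ∈ Finset.range n, ((s : ℝ) + d * l) := by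
  have hd' : (1 : ℝ) ≤ d := by exact_mod_cast hd
  have hs' : (1 : ℝ) ≤ s := by exact_mod_cast hs
  have hm' : (1 : ℝ) ≤ m := by exact_mod_cast hm
  cases n with
  | zero => simp; nlinarith
  | succ n =>
    have hn' : ((n : ℝ) + 1) ≤ m := by exact_mod_cast hn
    have haux : (d : ℝ) ^ n * n.factorial ≤ ∏ l ∈ Finset.range (n + 1), ((s : ℝ) + d * l) := by
      clear hn hn'
      induction n with
      | zero => simpa using hs'
      | succ n ih =>
        rw [Finset.prod_range_succ, pow_succ, Nat.factorial_succ]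
        push_cast
        calc (d : ℝ) ^ n * d * ((n + 1) * n.factorial)
            = (d ^ n * n.factorial) * (d * (n + 1)) := by ring
          _ ≤ _ := by
            refine mul_le_mul ih (by linarith) (by positivity) ?_
            exact Finset.prod_nonneg fun l _ => by positivity
    rw [pow_succ, Nat.factorial_succ]
    push_cast
    calc (d : ℝ) ^ n * d * ((n + 1) * n.factorial)
        = (d * (n + 1)) * (d ^ n * n.factorial) := by ring
      _ ≤ _ := by
        refine mul_le_mul (by gcongr) haux (by positivity) (by positivity)

theorem prod_add_le {D : ℝ} (hD : 0 ≤ D) {m : ℕ} :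
    ∏ k ∈ Finset.range m, (D + 1 + k) ≤ m.factorial * Real.exp (D * (1 + Real.log m)) := by
  have h1 : ∏ k ∈ Finset.range m, (D + 1 + k) ≤ m.factorial * Real.exp (D * (harmonic m : ℚ)) := by
    induction m with
    | zero => simp
    | succ m ih =>
      rw [Finset.prod_range_succ, Nat.factorial_succ, harmonic_succ]
      push_cast
      rw [mul_add D, Real.exp_add]
      have h2 : D + 1 + m ≤ (m + 1) * Real.exp (D * ((m : ℝ) + 1)⁻¹) := by
        have h3 := Real.add_one_le_exp (D * ((m : ℝ) + 1)⁻¹)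
        have h4 : D + 1 + m = (m + 1) * (D * ((m : ℝ) + 1)⁻¹ + 1) := by
          field_simp
          ring
        rw [h4]
        gcongr
      calc _ ≤ (m.factorial * Real.exp (D * (harmonic m : ℚ)))
            * ((m + 1) * Real.exp (D * ((m : ℝ) + 1)⁻¹)) := by
              exact mul_le_mul ih h2 (by positivity) (by positivity)
        _ = _ := by ring
  refine h1.trans ?_
  have := harmonic_le_one_add_log m
  gcongr

/-! ### Redundancy on a stretch without rescales -/

section Stretch

variable {N : ℕ} {cf : ℝ} {d T : ℕ} {s0 : Fin N → ℕ} {xs : ℕ → Fin N}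

theorem prod_le_mul_prod_RFDprob (hs0 : ∀ x, 1 ≤ s0 x) (hd : 1 ≤ d) {a m : ℕ} (hm : 1 ≤ m)
    (hno : ∀ l, l + 1 < m → RFDtotal cf d T s0 xs (a + l) + d ≤ T) {D : ℝ} (hD : 0 ≤ D)
    (htot : (RFDtotal cf d T s0 xs a : ℝ) ≤ d * (D + 1))
    {p : Fin N → ℝ} (hp0 : ∀ x, 0 ≤ p x) (hp1 : ∑ x, p x = 1) :
    ∏ k ∈ Finset.range m, p (xs (a + k))
      ≤ ((d * m : ℝ) ^ N * Real.exp (D * (1 + Real.log m)))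
        * ∏ k ∈ Finset.range m, RFDprob cf d T s0 xs (a + k) (xs (a + k)) := by
  set u : ℕ → Fin N := fun l => xs (a + l)
  set s : Fin N → ℕ := RFDcounts cf d T s0 xs a
  set t : ℕ := RFDtotal cf d T s0 xs a
  set E := Real.exp (D * (1 + Real.log m))
  have hd' : (0 : ℝ) < d := by exact_mod_cast hd
  have hNpos : 0 < N := (xs 0).pos
  have htpos : (0 : ℝ) < t := by
    have := RFDtotal_ge (cf := cf) (d := d) (T := T) (xs := xs) hs0 a
    exact_mod_cast (by omega : 0 < t)
  have hprob : ∏ k ∈ Finset.range m, RFDprob cf d T s0 xs (a + k) (xs (a + k))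
      = (∏ x, ∏ l ∈ Finset.range (occurrences u m x), ((s x : ℝ) + d * l))
        / ∏ k ∈ Finset.range m, ((t : ℝ) + d * k) := by
    rw [← prod_occurrences u (fun x l => (s x : ℝ) + d * l) m, ← Finset.prod_div_distrib]
    refine Finset.prod_congr rfl fun k hk => ?_
    rw [Finset.mem_range] at hk
    have hk' : ∀ l < k, RFDtotal cf d T s0 xs (a + l) + d ≤ T := fun l hl => hno l (by omega)
    rw [RFDprob, RFDtotal_add hk', RFDcounts_add hk']
    push_cast
    rfl
  have hden : ∏ k ∈ Finset.range m, ((t : ℝ) + d * k) ≤ d ^ m * (m.factorial * E) := by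
    calc ∏ k ∈ Finset.range m, ((t : ℝ) + d * k)
        ≤ ∏ k ∈ Finset.range m, (d * (D + 1 + k)) := by
          refine Finset.prod_le_prod (fun k _ => by positivity) fun k _ => ?_
          linarith
      _ = d ^ m * ∏ k ∈ Finset.range m, (D + 1 + k) := by simp [Finset.prod_mul_distrib]
      _ ≤ _ := by gcongr; exact prod_add_le hD
  have hnum : (d : ℝ) ^ m * ∏ x, ((occurrences u m x).factorial : ℝ)
      ≤ (d * m : ℝ) ^ N
        * ∏ x, ∏ l ∈ Finset.range (occurrences u m x), ((s x : ℝ) + d * l) := by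
    have := Finset.prod_le_prod
      (f := fun x : Fin N => (d : ℝ) ^ occurrences u m x * (occurrences u m x).factorial)
      (fun x _ => by positivity)
      fun x (_ : x ∈ Finset.univ) =>
        pow_mul_factorial_le (RFDcounts_pos (cf := cf) (d := d) (T := T) (xs := xs) hs0 a x) hd hm
          (occurrences_le u m x)
    simpa [Finset.prod_mul_distrib, Finset.prod_pow_eq_pow_sum, sum_occurrences] using this
  have hdenpos : 0 < ∏ k ∈ Finset.range m, ((t : ℝ) + d * k) :=
    Finset.prod_pos fun k _ => by positivity
  rw [hprob, ← mul_div_assoc, le_div_iff₀ hdenpos]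
  have hp : 0 ≤ ∏ k ∈ Finset.range m, p (u k) := Finset.prod_nonneg fun k _ => hp0 _
  calc (∏ k ∈ Finset.range m, p (u k)) * ∏ k ∈ Finset.range m, ((t : ℝ) + d * k)
      ≤ (∏ k ∈ Finset.range m, p (u k)) * (d ^ m * (m.factorial * E)) := by gcongr
    _ = d ^ m * E * (m.factorial * ∏ k ∈ Finset.range m, p (u k)) := by ring
    _ ≤ d ^ m * E * ∏ x, ((occurrences u m x).factorial : ℝ) := by
        gcongr
        exact factorial_mul_prod_le u hp0 hp1 m
    _ = E * (d ^ m * ∏ x, ((occurrences u m x).factorial : ℝ)) := by ring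
    _ ≤ E * ((d * m : ℝ) ^ N
        * ∏ x, ∏ l ∈ Finset.range (occurrences u m x), ((s x : ℝ) + d * l)) := by gcongr
    _ = _ := by ring

theorem RFDprob_pos (hs0 : ∀ x, 1 ≤ s0 x) (k : ℕ) (x : Fin N) :
    0 < RFDprob cf d T s0 xs k x := by
  have h1 := RFDcounts_pos (cf := cf) (d := d) (T := T) (xs := xs) hs0 k x
  have h2 := RFDtotal_ge (cf := cf) (d := d) (T := T) (xs := xs) hs0 k
  have hNpos : 0 < N := x.pos
  have h3 : (0 : ℝ) < RFDcounts cf d T s0 xs k x := by exact_mod_cast h1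
  have h4 : (0 : ℝ) < RFDtotal cf d T s0 xs k := by
    exact_mod_cast (by omega : 0 < RFDtotal cf d T s0 xs k)
  exact div_pos h3 h4

/-- Redundancy on steps `a, …, b` without a rescale before step `b`, when the total counter
before step `a` is at most `d * (D + 1)`. -/
theorem sum_logb_sub_logb_RFDprob_le (hs0 : ∀ x, 1 ≤ s0 x) (hd : 1 ≤ d) {a b : ℕ}
    (ha : 1 ≤ a) (hab : a ≤ b) (hno : ∀ k, a ≤ k → k < b → ¬ RFDrescaleAt cf d T s0 xs k)
    (htotT : ∀ k, RFDtotal cf d T s0 xs k ≤ T)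
    {D z : ℝ} (hD : 0 ≤ D) (hz : z = ((T : ℝ) - N) / d + 1)
    (htot : (RFDtotal cf d T s0 xs (a - 1) : ℝ) ≤ d * (D + 1))
    {p : Fin N → ℝ} (hp0 : ∀ x, 0 ≤ p x) (hp1 : ∑ x, p x = 1)
    (hp : ∀ k, a ≤ k → k ≤ b → p (xs (k - 1)) ≠ 0) :
    ∑ k ∈ Finset.Icc a b, (Real.logb 2 (p (xs (k - 1)))
        - Real.logb 2 (RFDprob cf d T s0 xs (k - 1) (xs (k - 1))))
      ≤ D * Real.logb 2 (Real.exp 1 * z) + N * Real.logb 2 z + N * Real.logb 2 d := by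
  have hd' : (0 : ℝ) < d := by exact_mod_cast hd
  obtain ⟨i, rfl⟩ : ∃ i, a = i + 1 := ⟨a - 1, by omega⟩
  obtain ⟨m, rfl⟩ : ∃ m, b = i + (m + 1) := ⟨b - (i + 1), by omega⟩
  rw [Nat.add_sub_cancel] at htot
  have hno' : ∀ l, l < m → RFDtotal cf d T s0 xs (i + l) + d ≤ T := by
    intro l hl
    by_contra hlt
    exact hno (i + l + 1) (by omega) (by omega) ⟨by omega, by simpa using hlt⟩
  have hmz : ((m + 1 : ℕ) : ℝ) ≤ z := by
    have h1 : N + d * m ≤ T := by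
      have h2 := RFDtotal_add hno'
      have h3 := htotT (i + m)
      have h4 := RFDtotal_ge (cf := cf) (d := d) (T := T) (xs := xs) hs0 i
      omega
    have h1' : (N : ℝ) + d * m ≤ T := by exact_mod_cast h1
    have h5 : (m : ℝ) ≤ ((T : ℝ) - N) / d := by
      rw [le_div_iff₀ hd']
      linarith
    push_cast
    linarith
  have hm0 : (0 : ℝ) < ((m + 1 : ℕ) : ℝ) := by positivity
  have hprod := prod_le_mul_prod_RFDprob (m := m + 1) hs0 hd (by omega)
    (fun l hl => hno' l (by omega)) hD htot hp0 hp1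
  have hppos : ∀ k ∈ Finset.range (m + 1), 0 < p (xs (i + k)) := by
    intro k hk
    rw [Finset.mem_range] at hk
    have := hp (i + k + 1) (by omega) (by omega)
    exact lt_of_le_of_ne (hp0 _) (Ne.symm (by simpa using this))
  have hlog := Real.logb_le_logb_of_le one_lt_two (Finset.prod_pos hppos) hprod
  have hRpos : ∀ k ∈ Finset.range (m + 1), 0 < RFDprob cf d T s0 xs (i + k) (xs (i + k)) :=
    fun k _ => RFDprob_pos hs0 _ _
  have hexp : ∀ y, Real.logb 2 (Real.exp y) = y * Real.logb 2 (Real.exp 1) := by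
    intro y
    rw [Real.logb, Real.logb, Real.log_exp, Real.log_exp]
    ring
  have hlogm : Real.log ((m + 1 : ℕ) : ℝ) * Real.logb 2 (Real.exp 1)
      = Real.logb 2 ((m + 1 : ℕ) : ℝ) := by
    rw [Real.logb, Real.logb, Real.log_exp]
    ring
  rw [Real.logb_prod _ _ fun k hk => (hppos k hk).ne',
    Real.logb_mul (by positivity) (Finset.prod_pos hRpos).ne',
    Real.logb_mul (by positivity) (Real.exp_pos _).ne',
    Real.logb_prod _ _ fun k hk => (hRpos k hk).ne', Real.logb_pow,
    Real.logb_mul hd'.ne' hm0.ne', hexp] at hlog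
  have hmono : Real.logb 2 ((m + 1 : ℕ) : ℝ) ≤ Real.logb 2 z :=
    Real.logb_le_logb_of_le one_lt_two hm0 hmz
  rw [← Finset.Ico_succ_right_eq_Icc, Finset.sum_Ico_eq_sum_range, Nat.succ_eq_succ,
    show (i + (m + 1)).succ - (i + 1) = m + 1 by omega, Finset.sum_sub_distrib,
    Real.logb_mul (Real.exp_pos 1).ne' (hm0.trans_le hmz).ne']
  simp only [show ∀ k, i + 1 + k - 1 = i + k by intro k; omega]
  have h1 : D * Real.logb 2 ((m + 1 : ℕ) : ℝ) ≤ D * Real.logb 2 z := by gcongr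
  have h2 : (N : ℝ) * Real.logb 2 ((m + 1 : ℕ) : ℝ) ≤ N * Real.logb 2 z := by gcongr
  have h3 : D * (1 + Real.log ((m + 1 : ℕ) : ℝ)) * Real.logb 2 (Real.exp 1)
      = D * Real.logb 2 (Real.exp 1) + D * Real.logb 2 ((m + 1 : ℕ) : ℝ) := by
    rw [← hlogm]
    ring
  linarith

open Classical in
theorem RFDrescalePartition.sum_rescale_le {n : ℕ} {R : List (ℕ × ℕ)}
    (hR : RFDrescalePartition cf d T s0 xs 1 n R) :
    ∑ k ∈ Finset.Ico 1 n, (if RFDrescaleAt cf d T s0 xs k then (1 : ℝ) else 0)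
      ≤ (R.length : ℝ) - 1 := by
  obtain ⟨hP, hno, -⟩ := hR
  have hend : ∀ k, 1 ≤ k → k ≤ n → (k < n → RFDrescaleAt cf d T s0 xs k) →
      k ∈ (R.map Prod.snd).toFinset := by
    intro k h1 h2 h3
    obtain ⟨q, hq, hq1, hq2⟩ := hP.exists_mem k h1 h2
    have hb := hP.mem_bounds q hq
    have : k = q.2 := by
      by_contra hne
      exact hno q hq k hq1 (by omega) (h3 (by omega))
    simpa using ⟨q.1, by rw [this]; exact hq⟩
  have hsub : insert n ((Finset.Ico 1 n).filter fun k => RFDrescaleAt cf d T s0 xs k)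
      ⊆ (R.map Prod.snd).toFinset := by
    intro k hk
    rw [Finset.mem_insert, Finset.mem_filter, Finset.mem_Ico] at hk
    rcases hk with rfl | ⟨⟨h1, h2⟩, h3⟩
    · exact hend k hP.le le_rfl fun h => absurd h (lt_irrefl k)
    · exact hend k h1 h2.le fun _ => h3
  have hcard := (Finset.card_le_card hsub).trans (List.toFinset_card_le _)
  rw [Finset.card_insert_of_notMem (by simp), List.length_map] at hcard
  rw [Finset.sum_boole, le_sub_iff_add_le]
  exact_mod_cast hcard

end Stretch

/-- Theorem 1: with `A = N/d + c·L`, `L = (T-N)/d` and `r` as above,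
for any realization of Algorithm RFD on `x^n` with rescale partition `R` and any
piecewise stationary model `PWS` with partition `S`:
`ℓ(x^n; RFD) - ℓ(x^n; PWS) ≤ |S|·[(1-c)·L·log₂(e·(L+1)) + log₂((1-c)·L) + r(L+1)]
  + (|R| - 1)·r(L+1)`.
If `PWS` assigns probability `0` somewhere, its code length is `+∞` and the claim is
trivial (first disjunct). -/
theorem stmt14 (N d T : ℕ) (cf : ℝ) (hN : 1 < N)
    (s0 : Fin N → ℕ) (xs : ℕ → Fin N)
    (hd : 1 ≤ d) (hc0 : 0 ≤ cf) (hc1 : cf < 1)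
    (hT : (d : ℝ) ≤ (1 - cf) * ((T : ℝ) - N))
    (hs0 : ∀ x, 1 ≤ s0 x) (hsum : ∑ x, s0 x ≤ T)
    (n : ℕ) (hn : 1 ≤ n)
    (R : List (ℕ × ℕ)) (hR : RFDrescalePartition cf d T s0 xs 1 n R)
    (S : List (ℕ × ℕ)) (hS : ConsecPartition 1 n S)
    (pI : ℕ × ℕ → Fin N → ℝ)
    (hpI : ∀ q ∈ S, (∀ x, 0 ≤ pI q x) ∧ ∑ x, pI q x = 1)
    (L : ℝ) (hL : L = ((T : ℝ) - N) / d)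
    (A : ℝ) (hA : A = (N : ℝ) / d + cf * L) :
    (∃ q ∈ S, ∃ k ∈ Finset.Icc q.1 q.2, pI q (xs (k - 1)) = 0) ∨
      RFDcodeLen cf d T s0 xs 1 n - pwsCodeLen S pI xs ≤
        (S.length : ℝ) * ((1 - cf) * L * Real.logb 2 (Real.exp 1 * (L + 1))
            + Real.logb 2 ((1 - cf) * L) + rBound N d A (L + 1))
        + ((R.length : ℝ) - 1) * rBound N d A (L + 1) := by
  classical
  by_cases hzero : ∃ q ∈ S, ∃ k ∈ Finset.Icc q.1 q.2, pI q (xs (k - 1)) = 0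
  · exact Or.inl hzero
  right
  push Not at hzero
  have hd' : (1 : ℝ) ≤ d := by exact_mod_cast hd
  have hd0 : (0 : ℝ) < d := by linarith
  have hcL : 1 ≤ (1 - cf) * L := by
    rw [hL, ← mul_div_assoc, le_div_iff₀ hd0]
    linarith
  have hL0 : 0 < L := by
    by_contra hneg
    nlinarith
  have hA0 : 0 ≤ A := by rw [hA]; positivity
  have htotT : ∀ k, RFDtotal cf d T s0 xs k ≤ T := RFDtotal_le hs0 hc0 hc1 hT hsum
  have hdL : (d : ℝ) * L = T - N := by rw [hL]; field_simp
  have hdA : (d : ℝ) * A = N + cf * (T - N) := by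
    rw [hA, ← hdL]
    field_simp
  have hz : L + 1 = ((T : ℝ) - N) / d + 1 := by rw [hL]
  have hlogz : 0 ≤ Real.logb 2 (L + 1) := Real.logb_nonneg one_lt_two (by linarith)
  have hlogd : 0 ≤ Real.logb 2 (d : ℝ) := Real.logb_nonneg one_lt_two hd'
  have hloge : 0 ≤ Real.logb 2 (Real.exp 1) :=
    Real.logb_nonneg one_lt_two (Real.one_le_exp zero_le_one)
  have hlogA : A * Real.logb 2 (Real.exp 1) ≤ Real.logb 2 ((A + 1) * Real.exp (A + 1)) := by
    have h1 : Real.logb 2 (Real.exp (A + 1)) = (A + 1) * Real.logb 2 (Real.exp 1) := by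
      rw [Real.logb, Real.logb, Real.log_exp, Real.log_exp]
      ring
    have h2 : 0 ≤ Real.logb 2 (A + 1) := Real.logb_nonneg one_lt_two (by linarith)
    rw [Real.logb_mul (by positivity) (Real.exp_pos _).ne', h1]
    linarith
  have hlogcL : 0 ≤ Real.logb 2 ((1 - cf) * L) := Real.logb_nonneg one_lt_two hcL
  have hlogez : Real.logb 2 (Real.exp 1 * (L + 1))
      = Real.logb 2 (Real.exp 1) + Real.logb 2 (L + 1) :=
    Real.logb_mul (Real.exp_pos 1).ne' (by positivity)
  set r := rBound N d A (L + 1) with hr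
  have hrge : A * Real.logb 2 (Real.exp 1 * (L + 1)) + N * Real.logb 2 (L + 1)
      + N * Real.logb 2 d ≤ r := by
    rw [hr, rBound, hlogez]
    linarith
  have hr0 : 0 ≤ r := by
    refine le_trans ?_ hrge
    rw [hlogez]
    positivity
  set C := (1 - cf) * L * Real.logb 2 (Real.exp 1 * (L + 1))
    + Real.logb 2 ((1 - cf) * L) + r with hC
  set ind : ℕ → ℝ := fun k => if RFDrescaleAt cf d T s0 xs k then 1 else 0 with hind
  have hseg : ∀ q ∈ S, ∑ k ∈ Finset.Icc q.1 q.2, (Real.logb 2 (pI q (xs (k - 1)))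
        - Real.logb 2 (RFDprob cf d T s0 xs (k - 1) (xs (k - 1))))
      ≤ C + r * ∑ k ∈ Finset.Ico q.1 q.2, ind k := by
    intro q hq
    obtain ⟨hq1, hq2, -⟩ := hS.mem_bounds q hq
    obtain ⟨hp0, hp1⟩ := hpI q hq
    refine sum_Icc_le_of_marked _ _ q.1 q.2 C r (fun b hab hbe hno => ?_)
      (fun j b haj hjb hbe hQj hno => ?_) q.2 hq2 le_rfl
    · have htot : (RFDtotal cf d T s0 xs (q.1 - 1) : ℝ) ≤ d * ((A + (1 - cf) * L) + 1) := by
        have h1 : (RFDtotal cf d T s0 xs (q.1 - 1) : ℝ) ≤ T := by exact_mod_cast htotT _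
        nlinarith
      refine (sum_logb_sub_logb_RFDprob_le hs0 hd hq1 hab hno htotT (by linarith) hz htot hp0 hp1
        fun k h1 h2 => hzero q hq k (Finset.mem_Icc.mpr ⟨h1, by omega⟩)).trans ?_
      rw [hC, add_mul]
      linarith
    · have htot : (RFDtotal cf d T s0 xs (j + 1 - 1) : ℝ) ≤ d * (A + 1) := by
        obtain ⟨hj1, hjT⟩ := hQj
        have h1 := RFDtotal_succ_of_lt hs0 hc0 hc1 hjT
        have h2 : (RFDtotal cf d T s0 xs (j - 1) : ℝ) ≤ T := by exact_mod_cast htotT _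
        rw [Nat.sub_add_cancel hj1] at h1
        rw [Nat.add_sub_cancel, mul_add, hdA]
        nlinarith
      exact (sum_logb_sub_logb_RFDprob_le hs0 hd (by omega) hjb (fun k h1 h2 => hno k h1 h2) htotT
        hA0 hz htot hp0 hp1 fun k h1 h2 =>
          hzero q hq k (Finset.mem_Icc.mpr ⟨by omega, by omega⟩)).trans hrge
  set ind' : ℕ → ℝ := fun k => if k < n then ind k else 0 with hind'
  have hind0 : ∀ k, 0 ≤ ind' k := fun k => by
    simp only [hind', hind]
    split_ifs <;> norm_num
  have hseg' : ∀ q ∈ S, (∑ k ∈ Finset.Icc q.1 q.2,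
        (-Real.logb 2 (RFDprob cf d T s0 xs (k - 1) (xs (k - 1))) - r * ind' k))
      ≤ (-∑ k ∈ Finset.Icc q.1 q.2, Real.logb 2 (pI q (xs (k - 1)))) + C := by
    intro q hq
    have h1 := hseg q hq
    obtain ⟨-, -, hqn⟩ := hS.mem_bounds q hq
    have h2 : ∑ k ∈ Finset.Ico q.1 q.2, ind k ≤ ∑ k ∈ Finset.Icc q.1 q.2, ind' k := by
      calc ∑ k ∈ Finset.Ico q.1 q.2, ind k = ∑ k ∈ Finset.Ico q.1 q.2, ind' k := by
            refine Finset.sum_congr rfl fun k hk => ?_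
            rw [Finset.mem_Ico] at hk
            simp only [hind', if_pos (show k < n by omega)]
        _ ≤ _ := Finset.sum_le_sum_of_subset_of_nonneg Finset.Ico_subset_Icc_self
            fun k _ _ => hind0 k
    have h3 := mul_le_mul_of_nonneg_left h2 hr0
    rw [Finset.sum_sub_distrib] at h1
    rw [Finset.sum_sub_distrib, Finset.sum_neg_distrib, ← Finset.mul_sum]
    linarith
  have htotal := List.sum_le_sum hseg'
  rw [← hS.sum_eq, List.sum_map_add, List.map_const', List.sum_replicate, nsmul_eq_mul,
    Finset.sum_sub_distrib, Finset.sum_neg_distrib, ← Finset.mul_sum] at htotal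
  have hcount : ∑ k ∈ Finset.Icc 1 n, ind' k ≤ (R.length : ℝ) - 1 := by
    rw [← Finset.sum_Ico_add_eq_sum_Icc hn]
    simp only [hind', lt_irrefl, if_false, add_zero]
    rw [Finset.sum_congr rfl fun k hk => if_pos (Finset.mem_Ico.mp hk).2]
    exact hR.sum_rescale_le
  have hcount' := mul_le_mul_of_nonneg_left hcount hr0
  rw [RFDcodeLen, pwsCodeLen]
  linarith
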